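/- arXiv:1003.0625 — 2 statements merged into one kernel-verified Lean document; each statement's English description precedes it below -/
import Mathlib

section
/- Let N ∈ {3,4,5}. Let f : ℝ^N → ℝ be twice continuously differentiable with ∇f ∈ L²(ℝ^N) and f ∈ L^{2N/(N−2)}(ℝ^N), satisfying pointwise the degenerate elliptic equation Σ_{j=2}^N ∂²_{x_j}f + |f|^{4/(N−2)} f = 0 on ℝ^N (no second derivative in the x₁ direction). Then f is identically zero. -/
open MeasureTheory Metric Filter Set

noncomputable section

/-- The ground state `W(x) = (1 + |x|²/(N(N-2)))^(-(N-2)/2)`. -/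
def W (N : ℕ) (x : EuclideanSpace ℝ (Fin N)) : ℝ :=
  (1 + ‖x‖ ^ 2 / ((N : ℝ) * ((N : ℝ) - 2))) ^ (-(((N : ℝ) - 2) / 2))

/-- The energy `E(v₀,v₁)`. -/
def energy (N : ℕ) (v₀ v₁ : EuclideanSpace ℝ (Fin N) → ℝ) : ℝ :=
  (1 / 2) * (∫ x, v₁ x ^ 2)
    + (1 / 2) * (∫ x, ‖gradient v₀ x‖ ^ 2)
    - ((N : ℝ) - 2) / (2 * (N : ℝ)) * (∫ x, |v₀ x| ^ (2 * (N : ℝ) / ((N : ℝ) - 2)))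

/-- The first coordinate of a point of `ℝ^N`. -/
def firstCoord {N : ℕ} (x : EuclideanSpace ℝ (Fin N)) : ℝ :=
  if h : 0 < N then x ⟨0, h⟩ else 0

/-- The Lorentz-transformed ground state `W_ℓ(t,x)`; the sum `x₂² + ⋯ + x_N²` is written
as `‖x‖² - x₁²`. -/
def Wl (N : ℕ) (ℓ : ℝ) (t : ℝ) (x : EuclideanSpace ℝ (Fin N)) : ℝ :=
  (1 + (firstCoord x - t * ℓ) ^ 2 / ((N : ℝ) * ((N : ℝ) - 2) * (1 - ℓ ^ 2))
     + (‖x‖ ^ 2 - firstCoord x ^ 2) / ((N : ℝ) * ((N : ℝ) - 2))) ^ (-(((N : ℝ) - 2) / 2))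

/-- The time derivative `∂ₜ W_ℓ(t,x)`. -/
def dtWl (N : ℕ) (ℓ : ℝ) (t : ℝ) (x : EuclideanSpace ℝ (Fin N)) : ℝ :=
  deriv (fun s => Wl N ℓ s x) t

/-- The second partial derivative `∂²f/∂xⱼ²` at `x`. -/
def d2 {N : ℕ} (f : EuclideanSpace ℝ (Fin N) → ℝ) (j : Fin N)
    (x : EuclideanSpace ℝ (Fin N)) : ℝ :=
  fderiv ℝ (fun y => fderiv ℝ f y (EuclideanSpace.single j 1)) x (EuclideanSpace.single j 1)

/-!
The equation is the Euler-Lagrange equation of the action `∫ |Df|² / 2 - |f|^(p+2) / (p+2)`, where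
`D` is the gradient in the coordinates other than `x₁`. As no derivative in `x₁` enters, a dilation
of `x₁` multiplies the action by a constant, so stationarity forces the action to vanish.
Stationarity under multiples of `f` gives `∫ |Df|² = ∫ |f|^(p+2)`, which leaves the value
`(1/2 - 1/(p+2)) ∫ |f|^(p+2)` for the action; hence `f = 0`. Both variations are made rigorous by
integrating a divergence. The fluxes at infinity vanish on average: the dilation current is
`O(|x|)` times an integrable function, and the amplitude current is `f Df`, with `f` in `L^(p+2)`,
`Df` in `L²` and `p + 2` at most the Sobolev exponent.
-/

open scoped Topology

section VanishingFlux

variable {E : Type*} [NormedAddCommGroup E]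

/-- The closed annulus `{x | R ≤ ‖x‖ ≤ 2R}`, where the gradient of the cutoff at scale `R` lives. -/
def annulus (E : Type*) [NormedAddCommGroup E] (R : ℝ) : Set E :=
  closedBall 0 (2 * R) \ ball 0 R

lemma mem_annulus {R : ℝ} {x : E} : x ∈ annulus E R ↔ ‖x‖ ≤ 2 * R ∧ R ≤ ‖x‖ := by
  simp [annulus]

lemma measurableSet_annulus [MeasurableSpace E] [BorelSpace E] (R : ℝ) :
    MeasurableSet (annulus E R) :=
  measurableSet_closedBall.diff measurableSet_ball

lemma isCompact_annulus [ProperSpace E] (R : ℝ) : IsCompact (annulus E R) :=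
  (isCompact_closedBall 0 (2 * R)).diff isOpen_ball

lemma isFiniteMeasure_restrict_annulus [ProperSpace E] [MeasurableSpace E] {μ : Measure E}
    [IsFiniteMeasureOnCompacts μ] (R : ℝ) : IsFiniteMeasure (μ.restrict (annulus E R)) :=
  isFiniteMeasure_restrict.2 (isCompact_annulus R).measure_ne_top

lemma tendsto_setIntegral_annulus [MeasurableSpace E] [BorelSpace E] {μ : Measure E}
    {h : E → ℝ} (hh : Integrable h μ) :
    Tendsto (fun R => ∫ x in annulus E R, h x ∂μ) atTop (𝓝 0) := by
  have hlim (x : E) : Tendsto (fun R => (annulus E R).indicator h x) atTop (𝓝 0) := by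
    refine tendsto_const_nhds.congr' ?_
    filter_upwards [eventually_gt_atTop ‖x‖] with R hR
    exact (indicator_of_notMem (fun hx => (mem_annulus.1 hx).2.not_gt hR) h).symm
  simpa only [integral_indicator (measurableSet_annulus _), integral_zero] using
    tendsto_integral_filter_of_dominated_convergence (fun x => ‖h x‖)
      (.of_forall fun R => (hh.indicator (measurableSet_annulus R)).aestronglyMeasurable)
      (.of_forall fun R => .of_forall fun x => norm_indicator_le_norm_self h x)
      hh.norm (.of_forall hlim)

/-- `F` has vanishing flux at infinity if the integral of `|F|` over the annulus of radius `R` is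
`o(R)`; averaging the flux over the annulus rather than taking it through a sphere avoids surface
integrals. The integral is the Bochner one, so the notion is meant for locally integrable `F`. -/
def HasVanishingFlux [MeasurableSpace E] (μ : Measure E) (F : E → ℝ) : Prop :=
  Tendsto (fun R : ℝ => R⁻¹ * ∫ x in annulus E R, |F x| ∂μ) atTop (𝓝 0)

lemma hasVanishingFlux_of_abs_le_norm_mul [MeasurableSpace E] [BorelSpace E] {μ : Measure E}
    {F h : E → ℝ} (hh : Integrable h μ) (hF : ∀ x, |F x| ≤ ‖x‖ * h x) :
    HasVanishingFlux μ F := by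
  have htail := (tendsto_setIntegral_annulus hh.abs).const_mul 2
  rw [mul_zero] at htail
  refine squeeze_zero' ?_ ?_ htail
  · filter_upwards [eventually_ge_atTop 0] with R hR
    exact mul_nonneg (inv_nonneg.2 hR) (integral_nonneg fun x => abs_nonneg _)
  filter_upwards [eventually_gt_atTop 0] with R hR
  have hle : ∀ x ∈ annulus E R, |F x| ≤ 2 * R * |h x| := fun x hx =>
    (hF x).trans (mul_le_mul (mem_annulus.1 hx).1 (le_abs_self _)
      (nonneg_of_mul_nonneg_right ((abs_nonneg _).trans (hF x))
        (hR.trans_le (mem_annulus.1 hx).2)) (by positivity))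
  have hint : ∫ x in annulus E R, |F x| ∂μ ≤ ∫ x in annulus E R, 2 * R * |h x| ∂μ :=
    integral_mono_of_nonneg (.of_forall fun x => abs_nonneg _) (hh.abs.integrableOn.const_mul _)
      ((ae_restrict_iff' (measurableSet_annulus R)).2 (.of_forall hle))
  calc R⁻¹ * ∫ x in annulus E R, |F x| ∂μ
      ≤ R⁻¹ * ∫ x in annulus E R, 2 * R * |h x| ∂μ := by gcongr
    _ = 2 * ∫ x in annulus E R, |h x| ∂μ := by
        rw [integral_const_mul]; field_simp

lemma memLp_ofReal_iff_integrable_abs_rpow {α : Type*} [MeasurableSpace α] {ν : Measure α}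
    {f : α → ℝ} {q : ℝ} (hq : 0 < q) (hf : AEStronglyMeasurable f ν) :
    MemLp f (ENNReal.ofReal q) ν ↔ Integrable (fun x => |f x| ^ q) ν := by
  rw [← integrable_norm_rpow_iff hf (by simpa using hq) ENNReal.ofReal_ne_top,
    ENNReal.toReal_ofReal hq.le]
  rfl

lemma integral_sq_le_rpow_mul_measureReal_univ {α : Type*} [MeasurableSpace α] {ν : Measure α}
    [IsFiniteMeasure ν] {f : α → ℝ} {q : ℝ} (hq : 2 < q) (hf : MemLp f (ENNReal.ofReal q) ν) :
    ∫ x, f x ^ 2 ∂ν ≤ (∫ x, |f x| ^ q ∂ν) ^ (2 / q) * ν.real univ ^ (1 - 2 / q) := by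
  have hpow (x : α) : (f x ^ 2) ^ (q / 2) = |f x| ^ q := by
    rw [← sq_abs, ← Real.rpow_natCast, ← Real.rpow_mul (abs_nonneg _)]
    congr 1
    push_cast
    ring
  have hconj : (q / 2).HolderConjugate (1 - 2 / q)⁻¹ := by
    rw [Real.holderConjugate_iff]
    exact ⟨by linarith, by simp⟩
  have hf2 : MemLp (fun x => f x ^ 2) (ENNReal.ofReal (q / 2)) ν := by
    simpa [ENNReal.ofReal_div_of_pos] using hf.norm_rpow_div 2
  simpa [hpow] using integral_mul_le_Lp_mul_Lq_of_nonneg (μ := ν) (g := fun _ => 1) hconj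
    (.of_forall fun x => sq_nonneg (f x)) (.of_forall fun _ => zero_le_one) hf2 (memLp_const 1)

variable [NormedSpace ℝ E] [FiniteDimensional ℝ E] [MeasurableSpace E] [BorelSpace E]
  {μ : Measure E} [μ.IsAddHaarMeasure]

lemma measureReal_annulus_le {R : ℝ} (hR : 0 ≤ R) :
    μ.real (annulus E R) ≤ R ^ Module.finrank ℝ E * μ.real (closedBall (0 : E) 2) := by
  calc μ.real (annulus E R) ≤ μ.real (closedBall 0 (2 * R)) :=
        measureReal_mono sdiff_subset measure_closedBall_lt_top.ne
    _ = R ^ Module.finrank ℝ E * μ.real (closedBall (0 : E) 2) := by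
        rw [Measure.addHaar_real_closedBall _ _ (by positivity),
          Measure.addHaar_real_closedBall _ _ zero_le_two]
        ring

/- On the annulus, Hölder's inequality costs a factor `R ^ (d * (1 - 2 / q))`, and `q` being at most
the Sobolev exponent `2d / (d - 2)` means that `R ^ (-2)` compensates it. -/
lemma tendsto_inv_sq_mul_setIntegral_annulus_sq {f : E → ℝ} {q : ℝ} (hq : 2 < q)
    (hqd : Module.finrank ℝ E * (q - 2) ≤ 2 * q) (hf : MemLp f (ENNReal.ofReal q) μ) :
    Tendsto (fun R : ℝ => (R ^ 2)⁻¹ * ∫ x in annulus E R, f x ^ 2 ∂μ) atTop (𝓝 0) := by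
  set d := Module.finrank ℝ E
  set V := μ.real (closedBall (0 : E) 2)
  have hq0 : 0 < q := by linarith
  have hθ : 0 ≤ 1 - 2 / q := sub_nonneg.2 ((div_le_one hq0).2 hq.le)
  have hfq := (memLp_ofReal_iff_integrable_abs_rpow hq0 hf.aestronglyMeasurable).1 hf
  have hexp : d * (1 - 2 / q) ≤ 2 := by
    rw [one_sub_div hq0.ne', mul_div_assoc', div_le_iff₀ hq0]
    exact hqd
  have htail := ((tendsto_setIntegral_annulus hfq).rpow_const
    (.inr (by positivity : 0 ≤ 2 / q))).mul_const (V ^ (1 - 2 / q))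
  rw [Real.zero_rpow (by positivity), zero_mul] at htail
  refine squeeze_zero' ?_ ?_ htail
  · exact .of_forall fun R => mul_nonneg (by positivity) (integral_nonneg fun x => sq_nonneg _)
  filter_upwards [eventually_ge_atTop 1] with R hR
  have := isFiniteMeasure_restrict_annulus (μ := μ) R
  set I := ∫ x in annulus E R, |f x| ^ q ∂μ
  have hvol : μ.real (annulus E R) ^ (1 - 2 / q) ≤ R ^ 2 * V ^ (1 - 2 / q) := by
    calc μ.real (annulus E R) ^ (1 - 2 / q) ≤ (R ^ d * V) ^ (1 - 2 / q) := by
          gcongr; exact measureReal_annulus_le (by linarith)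
      _ = R ^ (d * (1 - 2 / q)) * V ^ (1 - 2 / q) := by
          rw [Real.mul_rpow (by positivity) measureReal_nonneg,
            ← Real.rpow_natCast_mul (by linarith)]
      _ ≤ R ^ 2 * V ^ (1 - 2 / q) := by
          rw [← Real.rpow_two]; gcongr
  calc (R ^ 2)⁻¹ * ∫ x in annulus E R, f x ^ 2 ∂μ
      ≤ (R ^ 2)⁻¹ * (I ^ (2 / q) * μ.real (annulus E R) ^ (1 - 2 / q)) := by
        gcongr
        simpa using integral_sq_le_rpow_mul_measureReal_univ hq (hf.restrict _)
    _ ≤ (R ^ 2)⁻¹ * (I ^ (2 / q) * (R ^ 2 * V ^ (1 - 2 / q))) := by gcongr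
    _ = I ^ (2 / q) * V ^ (1 - 2 / q) := by field_simp

lemma hasVanishingFlux_mul {f g : E → ℝ} {q : ℝ} (hq : 2 < q)
    (hqd : Module.finrank ℝ E * (q - 2) ≤ 2 * q) (hf : MemLp f (ENNReal.ofReal q) μ)
    (hg : MemLp g 2 μ) : HasVanishingFlux μ (fun x => f x * g x) := by
  have htail := ((tendsto_inv_sq_mul_setIntegral_annulus_sq hq hqd hf).add
    (tendsto_setIntegral_annulus hg.integrable_sq)).div_const 2
  rw [add_zero, zero_div] at htail
  refine squeeze_zero' ?_ ?_ htail
  · filter_upwards [eventually_ge_atTop 0] with R hR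
    exact mul_nonneg (inv_nonneg.2 hR) (integral_nonneg fun x => abs_nonneg _)
  filter_upwards [eventually_gt_atTop 0] with R hR
  have := isFiniteMeasure_restrict_annulus (μ := μ) R
  have hf2 : IntegrableOn (fun x => f x ^ 2) (annulus E R) μ :=
    ((hf.restrict _).mono_exponent (by simpa using ENNReal.ofReal_le_ofReal hq.le)).integrable_sq
  have hg2 : IntegrableOn (fun x => g x ^ 2) (annulus E R) μ := hg.integrable_sq.integrableOn
  have hyoung (x : E) : R⁻¹ * |f x * g x| ≤ ((R ^ 2)⁻¹ * f x ^ 2 + g x ^ 2) / 2 := by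
    have := two_mul_le_add_sq (R⁻¹ * |f x|) |g x|
    rw [mul_pow, sq_abs, sq_abs, inv_pow] at this
    rw [abs_mul]
    linarith
  calc R⁻¹ * ∫ x in annulus E R, |f x * g x| ∂μ
      = ∫ x in annulus E R, R⁻¹ * |f x * g x| ∂μ := (integral_const_mul _ _).symm
    _ ≤ ∫ x in annulus E R, ((R ^ 2)⁻¹ * f x ^ 2 + g x ^ 2) / 2 ∂μ :=
        integral_mono_of_nonneg (.of_forall fun x => by positivity)
          (((hf2.const_mul _).add hg2).div_const 2) (.of_forall hyoung)
    _ = ((R ^ 2)⁻¹ * ∫ x in annulus E R, f x ^ 2 ∂μ + ∫ x in annulus E R, g x ^ 2 ∂μ) / 2 := by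
        rw [integral_div, integral_add (hf2.const_mul _) hg2, integral_const_mul]

end VanishingFlux

section Cutoff

variable {E : Type*} [NormedAddCommGroup E] [NormedSpace ℝ E] [HasContDiffBump E]

/-- The smooth cutoff at scale `R`, equal to `1` on the ball of radius `R` and supported in the ball
of radius `2R`. All scales are dilates of one bump function, so that the gradient is `O(1 / R)`. -/
def cutoff (R : ℝ) (x : E) : ℝ :=
  (⟨1, 2, one_pos, one_lt_two⟩ : ContDiffBump (0 : E)) (R⁻¹ • x)

lemma contDiff_cutoff (R : ℝ) : ContDiff ℝ 1 (cutoff R : E → ℝ) :=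
  (ContDiffBump.contDiff _).comp (contDiff_const_smul _)

lemma hasCompactSupport_cutoff [FiniteDimensional ℝ E] {R : ℝ} (hR : 0 < R) :
    HasCompactSupport (cutoff R : E → ℝ) :=
  (ContDiffBump.hasCompactSupport _).comp_smul (inv_ne_zero hR.ne')

lemma norm_cutoff_le_one (R : ℝ) (x : E) : ‖cutoff R x‖ ≤ 1 := by
  rw [Real.norm_of_nonneg (show 0 ≤ cutoff R x from ContDiffBump.nonneg _)]
  exact ContDiffBump.le_one _

lemma cutoff_eq_one {R : ℝ} (hR : 0 < R) {x : E} (hx : ‖x‖ ≤ R) : cutoff R x = 1 := by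
  refine ContDiffBump.one_of_mem_closedBall _ (mem_closedBall_zero_iff.2 ?_)
  rw [norm_smul, norm_inv, Real.norm_of_nonneg hR.le, inv_mul_le_iff₀ hR, mul_one]
  exact hx

lemma cutoff_eq_zero {R : ℝ} (hR : 0 < R) {x : E} (hx : 2 * R ≤ ‖x‖) : cutoff R x = 0 := by
  refine ContDiffBump.zero_of_le_dist _ ?_
  rw [dist_zero_right, norm_smul, norm_inv, Real.norm_of_nonneg hR.le, le_inv_mul_iff₀ hR, mul_comm]
  exact hx

lemma fderiv_cutoff_eq_zero {R : ℝ} (hR : 0 < R) {x : E} (hx : x ∉ annulus E R) :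
    fderiv ℝ (cutoff R) x = 0 := by
  have hlocal : ∃ c : ℝ, (cutoff R : E → ℝ) =ᶠ[𝓝 x] fun _ => c := by
    rcases lt_or_ge ‖x‖ R with hlt | hle
    · refine ⟨1, ?_⟩
      filter_upwards [isOpen_ball.mem_nhds (mem_ball_zero_iff.2 hlt)] with y hy
      exact cutoff_eq_one hR (mem_ball_zero_iff.1 hy).le
    · have hgt : 2 * R < ‖x‖ := not_le.1 fun h => hx (mem_annulus.2 ⟨h, hle⟩)
      refine ⟨0, ?_⟩
      filter_upwards [(isOpen_lt continuous_const continuous_norm).mem_nhds hgt] with y hy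
      exact cutoff_eq_zero hR (le_of_lt hy)
  obtain ⟨c, hc⟩ := hlocal
  rw [hc.fderiv_eq, fderiv_const_apply]

lemma exists_norm_fderiv_cutoff_le [FiniteDimensional ℝ E] :
    ∃ C, ∀ R > 0, ∀ x : E, ‖fderiv ℝ (cutoff R) x‖ ≤ R⁻¹ * C := by
  let χ : ContDiffBump (0 : E) := ⟨1, 2, one_pos, one_lt_two⟩
  obtain ⟨C, hC⟩ := (χ.hasCompactSupport.fderiv ℝ).exists_bound_of_continuous
    (χ.contDiff.continuous_fderiv one_ne_zero)
  refine ⟨C, fun R hR x => ?_⟩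
  calc ‖fderiv ℝ (cutoff R) x‖ = R⁻¹ * ‖fderiv ℝ χ (R⁻¹ • x)‖ := by
        rw [show fderiv ℝ (cutoff R) x = R⁻¹ • fderiv ℝ χ (R⁻¹ • x) from fderiv_comp_smul R⁻¹,
          norm_smul, norm_inv, Real.norm_of_nonneg hR.le]
    _ ≤ R⁻¹ * C := by gcongr; exact hC _

lemma tendsto_integral_cutoff_mul [MeasurableSpace E] [OpensMeasurableSpace E] {μ : Measure E}
    {g : E → ℝ} (hg : Integrable g μ) :
    Tendsto (fun R => ∫ x, cutoff R x * g x ∂μ) atTop (𝓝 (∫ x, g x ∂μ)) := by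
  refine tendsto_integral_filter_of_dominated_convergence (fun x => ‖g x‖)
    (.of_forall fun R =>
      (contDiff_cutoff R).continuous.aestronglyMeasurable.mul hg.aestronglyMeasurable)
    (.of_forall fun R => .of_forall fun x => ?_) hg.norm (.of_forall fun x => ?_)
  · rw [norm_mul]
    exact mul_le_of_le_one_left (norm_nonneg _) (norm_cutoff_le_one R x)
  · refine tendsto_const_nhds.congr' ?_
    filter_upwards [eventually_gt_atTop 0, eventually_ge_atTop ‖x‖] with R hR hx
    rw [cutoff_eq_one hR hx, one_mul]

end Cutoff

section Divergence

lemma integrable_mul_of_hasCompactSupport {X : Type*} [TopologicalSpace X] [MeasurableSpace X]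
    [OpensMeasurableSpace X] {μ : Measure X} [IsFiniteMeasureOnCompacts μ] {φ g : X → ℝ}
    (hφ : Continuous φ) (hc : HasCompactSupport φ) (hg : Continuous g) :
    Integrable (fun x => φ x * g x) μ :=
  (hφ.mul hg).integrable_of_hasCompactSupport hc.mul_right

variable {E : Type*} [NormedAddCommGroup E] [NormedSpace ℝ E] [FiniteDimensional ℝ E]
  [MeasurableSpace E] [BorelSpace E] {μ : Measure E}

lemma integral_mul_sum_fderiv_eq_neg [μ.IsAddHaarMeasure] {ι : Type*} {s : Finset ι}
    {F : ι → E → ℝ} {v : ι → E} {φ : E → ℝ} (hφ : ContDiff ℝ 1 φ) (hc : HasCompactSupport φ)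
    (hF : ∀ j ∈ s, ContDiff ℝ 1 (F j)) :
    ∫ x, φ x * ∑ j ∈ s, fderiv ℝ (F j) x (v j) ∂μ =
      -∑ j ∈ s, ∫ x, fderiv ℝ φ x (v j) * F j x ∂μ := by
  have hint (j) (hj : j ∈ s) : Integrable (fun x => φ x * fderiv ℝ (F j) x (v j)) μ :=
    integrable_mul_of_hasCompactSupport hφ.continuous hc
      (((hF j hj).continuous_fderiv one_ne_zero).clm_apply continuous_const)
  simp_rw [Finset.mul_sum]
  rw [integral_finsetSum s hint, ← Finset.sum_neg_distrib]
  refine Finset.sum_congr rfl fun j hj => ?_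
  exact integral_mul_fderiv_eq_neg_fderiv_mul_of_integrable
    (integrable_mul_of_hasCompactSupport
      ((hφ.continuous_fderiv one_ne_zero).clm_apply continuous_const) (hc.fderiv_apply ℝ _)
      (hF j hj).continuous)
    (hint j hj)
    (integrable_mul_of_hasCompactSupport hφ.continuous hc (hF j hj).continuous)
    (fun x _ => hφ.differentiable one_ne_zero x)
    (fun x _ => (hF j hj).differentiable one_ne_zero x)

variable [HasContDiffBump E]

lemma HasVanishingFlux.tendsto_integral_fderiv_cutoff_mul [IsFiniteMeasureOnCompacts μ]
    {F : E → ℝ} (hflux : HasVanishingFlux μ F) (hF : Continuous F) (v : E) :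
    Tendsto (fun R => ∫ x, fderiv ℝ (cutoff R) x v * F x ∂μ) atTop (𝓝 0) := by
  obtain ⟨C, hC⟩ := exists_norm_fderiv_cutoff_le (E := E)
  have htail := Tendsto.const_mul (C * ‖v‖) hflux
  rw [mul_zero] at htail
  refine squeeze_zero_norm' ?_ htail
  filter_upwards [eventually_gt_atTop 0] with R hR
  have hpt (x : E) : ‖fderiv ℝ (cutoff R) x v * F x‖ ≤
      (annulus E R).indicator (fun x => R⁻¹ * C * ‖v‖ * |F x|) x := by
    by_cases hx : x ∈ annulus E R
    · rw [indicator_of_mem hx, norm_mul, Real.norm_eq_abs (F x)]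
      gcongr
      exact ContinuousLinearMap.le_of_opNorm_le _ (hC R hR x) v
    · simp [fderiv_cutoff_eq_zero hR hx, indicator_of_notMem hx]
  have hint : IntegrableOn (fun x => R⁻¹ * C * ‖v‖ * |F x|) (annulus E R) μ :=
    (continuous_const.mul hF.abs).continuousOn.integrableOn_compact (isCompact_annulus R)
  calc ‖∫ x, fderiv ℝ (cutoff R) x v * F x ∂μ‖
      ≤ ∫ x, (annulus E R).indicator (fun x => R⁻¹ * C * ‖v‖ * |F x|) x ∂μ :=
        norm_integral_le_of_norm_le
          ((integrable_indicator_iff (measurableSet_annulus R)).2 hint) (.of_forall hpt)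
    _ = C * ‖v‖ * (R⁻¹ * ∫ x in annulus E R, |F x| ∂μ) := by
        rw [integral_indicator (measurableSet_annulus R), integral_const_mul]
        ring

theorem integral_sum_fderiv_eq_zero [μ.IsAddHaarMeasure] {ι : Type*} {s : Finset ι}
    {F : ι → E → ℝ} {v : ι → E} (hF : ∀ j ∈ s, ContDiff ℝ 1 (F j))
    (hflux : ∀ j ∈ s, HasVanishingFlux μ (F j))
    (hint : Integrable (fun x => ∑ j ∈ s, fderiv ℝ (F j) x (v j)) μ) :
    ∫ x, ∑ j ∈ s, fderiv ℝ (F j) x (v j) ∂μ = 0 := by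
  have hsum : Tendsto (fun R => -∑ j ∈ s, ∫ x, fderiv ℝ (cutoff R) x (v j) * F j x ∂μ)
      atTop (𝓝 0) := by
    simpa using (tendsto_finsetSum s fun j hj =>
      (hflux j hj).tendsto_integral_fderiv_cutoff_mul (hF j hj).continuous (v j)).neg
  refine tendsto_nhds_unique (tendsto_integral_cutoff_mul hint) (hsum.congr' ?_)
  filter_upwards [eventually_gt_atTop 0] with R hR
  exact (integral_mul_sum_fderiv_eq_neg (contDiff_cutoff R) (hasCompactSupport_cutoff hR) hF).symm

end Divergence

section PartialDeriv

variable {N : ℕ} {f g : EuclideanSpace ℝ (Fin N) → ℝ} {x : EuclideanSpace ℝ (Fin N)}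

/-- The partial derivative `∂f/∂xⱼ`, taken as an operator on functions so that it can be iterated;
like `fderiv`, it is `0` where `f` is not differentiable. -/
def partialDeriv (j : Fin N) (f : EuclideanSpace ℝ (Fin N) → ℝ)
    (x : EuclideanSpace ℝ (Fin N)) : ℝ :=
  fderiv ℝ f x (EuclideanSpace.single j 1)

lemma d2_eq_partialDeriv (f : EuclideanSpace ℝ (Fin N) → ℝ) (j : Fin N) :
    d2 f j = partialDeriv j (partialDeriv j f) :=
  rfl

lemma partialDeriv_eq_gradient_apply (f : EuclideanSpace ℝ (Fin N) → ℝ) (j : Fin N)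
    (x : EuclideanSpace ℝ (Fin N)) : partialDeriv j f x = gradient f x j := by
  rw [partialDeriv, ← inner_gradient_left, EuclideanSpace.inner_single_right]
  simp

lemma abs_partialDeriv_le_norm_gradient (f : EuclideanSpace ℝ (Fin N) → ℝ) (j : Fin N)
    (x : EuclideanSpace ℝ (Fin N)) : |partialDeriv j f x| ≤ ‖gradient f x‖ := by
  rw [partialDeriv_eq_gradient_apply]
  exact PiLp.norm_apply_le (gradient f x) j

lemma abs_partialDeriv_mul_partialDeriv_le (f : EuclideanSpace ℝ (Fin N) → ℝ) (i j : Fin N)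
    (x : EuclideanSpace ℝ (Fin N)) :
    |partialDeriv i f x * partialDeriv j f x| ≤ ‖gradient f x‖ ^ 2 := by
  rw [abs_mul, sq]
  exact mul_le_mul (abs_partialDeriv_le_norm_gradient f i x)
    (abs_partialDeriv_le_norm_gradient f j x) (abs_nonneg _) (norm_nonneg _)

lemma contDiff_coord (j : Fin N) : ContDiff ℝ 1 (fun x : EuclideanSpace ℝ (Fin N) => x j) :=
  (EuclideanSpace.proj (𝕜 := ℝ) j).contDiff

lemma partialDeriv_coord (i j : Fin N) (x : EuclideanSpace ℝ (Fin N)) :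
    partialDeriv j (fun x => x i) x = if i = j then 1 else 0 := by
  rw [partialDeriv, show fderiv ℝ (fun x : EuclideanSpace ℝ (Fin N) => x i) x =
    EuclideanSpace.proj i from (EuclideanSpace.proj (𝕜 := ℝ) i).fderiv]
  simp

lemma partialDeriv_mul (j : Fin N) (hf : DifferentiableAt ℝ f x) (hg : DifferentiableAt ℝ g x) :
    partialDeriv j (fun y => f y * g y) x =
      partialDeriv j f x * g x + f x * partialDeriv j g x := by
  simp only [partialDeriv, fderiv_fun_mul hf hg, add_apply, smul_apply, smul_eq_mul]
  ring

lemma contDiff_partialDeriv (hf : ContDiff ℝ 2 f) (j : Fin N) : ContDiff ℝ 1 (partialDeriv j f) :=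
  (hf.fderiv_right (m := 1) (by norm_num)).clm_apply contDiff_const

lemma partialDeriv_comm (hf : ContDiff ℝ 2 f) (i j : Fin N) (x : EuclideanSpace ℝ (Fin N)) :
    partialDeriv i (partialDeriv j f) x = partialDeriv j (partialDeriv i f) x := by
  have hdiff : DifferentiableAt ℝ (fderiv ℝ f) x :=
    (hf.fderiv_right (m := 1) (by norm_num)).differentiable one_ne_zero x
  have hsnd (i j : Fin N) : partialDeriv i (partialDeriv j f) x =
      fderiv ℝ (fderiv ℝ f) x (EuclideanSpace.single i 1) (EuclideanSpace.single j 1) := by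
    rw [partialDeriv, show partialDeriv j f = fun y => fderiv ℝ f y _ from rfl,
      fderiv_clm_apply hdiff (differentiableAt_const _)]
    simp
  rw [hsnd, hsnd]
  exact hf.contDiffAt.isSymmSndFDerivAt (by simp) _ _

lemma memLp_two_partialDeriv (hf : ContDiff ℝ 2 f)
    (hgrad : Integrable (fun x => ‖gradient f x‖ ^ 2)) (j : Fin N) :
    MemLp (partialDeriv j f) 2 := by
  have hcont := (contDiff_partialDeriv hf j).continuous
  refine (memLp_two_iff_integrable_sq hcont.aestronglyMeasurable).2
    (hgrad.mono' (hcont.pow 2).aestronglyMeasurable (.of_forall fun x => ?_))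
  rw [norm_pow]
  exact pow_le_pow_left₀ (norm_nonneg _) (abs_partialDeriv_le_norm_gradient f j x) 2

end PartialDeriv

section Lagrangian

variable {N : ℕ} {f : EuclideanSpace ℝ (Fin N) → ℝ} {p : ℝ}

/-- The squared length `∑_{k ∈ S} (∂ₖf)²` of the part of the gradient of `f` along the coordinates
in `S`. -/
def partialGradSq (S : Finset (Fin N)) (f : EuclideanSpace ℝ (Fin N) → ℝ)
    (x : EuclideanSpace ℝ (Fin N)) : ℝ :=
  ∑ k ∈ S, partialDeriv k f x ^ 2

/-- The Lagrangian density whose Euler-Lagrange equation is `∑_{j ∈ S} ∂ⱼ²f + |f|ᵖf = 0`. -/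
def lagrangian (S : Finset (Fin N)) (p : ℝ) (f : EuclideanSpace ℝ (Fin N) → ℝ)
    (x : EuclideanSpace ℝ (Fin N)) : ℝ :=
  partialGradSq S f x / 2 - |f x| ^ (p + 2) / (p + 2)

lemma partialGradSq_nonneg (S : Finset (Fin N)) (f : EuclideanSpace ℝ (Fin N) → ℝ)
    (x : EuclideanSpace ℝ (Fin N)) : 0 ≤ partialGradSq S f x :=
  Finset.sum_nonneg fun _ _ => sq_nonneg _

lemma partialGradSq_le_norm_gradient_sq (S : Finset (Fin N))
    (f : EuclideanSpace ℝ (Fin N) → ℝ) (x : EuclideanSpace ℝ (Fin N)) :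
    partialGradSq S f x ≤ ‖gradient f x‖ ^ 2 := by
  simp only [partialGradSq, partialDeriv_eq_gradient_apply, EuclideanSpace.real_norm_sq_eq]
  exact Finset.sum_le_univ_sum_of_nonneg fun _ => sq_nonneg _

lemma abs_lagrangian_le (hp : 0 ≤ p) (S : Finset (Fin N)) (f : EuclideanSpace ℝ (Fin N) → ℝ)
    (x : EuclideanSpace ℝ (Fin N)) :
    |lagrangian S p f x| ≤ ‖gradient f x‖ ^ 2 + |f x| ^ (p + 2) := by
  have hgrad := partialGradSq_le_norm_gradient_sq S f x
  have hgrad0 := partialGradSq_nonneg S f x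
  have hpot0 : 0 ≤ |f x| ^ (p + 2) := by positivity
  have hpot : |f x| ^ (p + 2) / (p + 2) ≤ |f x| ^ (p + 2) := div_le_self hpot0 (by linarith)
  have hpot0' : 0 ≤ |f x| ^ (p + 2) / (p + 2) := by positivity
  rw [lagrangian, abs_le]
  constructor <;> linarith

lemma contDiff_partialGradSq (hf : ContDiff ℝ 2 f) (S : Finset (Fin N)) :
    ContDiff ℝ 1 (partialGradSq S f) :=
  ContDiff.sum fun k _ => (contDiff_partialDeriv hf k).pow 2

lemma contDiff_lagrangian (hf : ContDiff ℝ 2 f) (hp : 0 ≤ p) (S : Finset (Fin N)) :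
    ContDiff ℝ 1 (lagrangian S p f) :=
  ((contDiff_partialGradSq hf S).div_const 2).sub
    (((hf.of_le one_le_two).norm_rpow (by linarith)).div_const (p + 2))

lemma integrable_partialGradSq (hf : ContDiff ℝ 2 f)
    (hgrad : Integrable (fun x => ‖gradient f x‖ ^ 2)) (S : Finset (Fin N)) :
    Integrable (partialGradSq S f) :=
  hgrad.mono' (contDiff_partialGradSq hf S).continuous.aestronglyMeasurable <|
    .of_forall fun x => (Real.norm_of_nonneg (partialGradSq_nonneg S f x)).trans_le
      (partialGradSq_le_norm_gradient_sq S f x)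

lemma integrable_lagrangian (hf : ContDiff ℝ 2 f)
    (hgrad : Integrable (fun x => ‖gradient f x‖ ^ 2))
    (hLp : Integrable (fun x => |f x| ^ (p + 2))) (S : Finset (Fin N)) :
    Integrable (lagrangian S p f) :=
  ((integrable_partialGradSq hf hgrad S).div_const 2).sub (hLp.div_const (p + 2))

lemma integral_lagrangian (hf : ContDiff ℝ 2 f)
    (hgrad : Integrable (fun x => ‖gradient f x‖ ^ 2))
    (hLp : Integrable (fun x => |f x| ^ (p + 2))) (S : Finset (Fin N)) :
    ∫ x, lagrangian S p f x =
      (∫ x, partialGradSq S f x) / 2 - (∫ x, |f x| ^ (p + 2)) / (p + 2) := by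
  simp only [lagrangian]
  rw [integral_sub ((integrable_partialGradSq hf hgrad S).div_const 2) (hLp.div_const _),
    integral_div, integral_div]

lemma partialDeriv_lagrangian (hf : ContDiff ℝ 2 f) (hp : 0 ≤ p) (S : Finset (Fin N)) (i : Fin N)
    (x : EuclideanSpace ℝ (Fin N)) :
    partialDeriv i (lagrangian S p f) x =
      ∑ k ∈ S, partialDeriv k f x * partialDeriv i (partialDeriv k f) x
        - |f x| ^ p * f x * partialDeriv i f x := by
  have hkin := HasFDerivAt.fun_sum (u := S) fun k _ =>
    ((contDiff_partialDeriv hf k).differentiable one_ne_zero x).hasFDerivAt.pow 2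
  have hpot := (hasDerivAt_abs_rpow (f x) (by linarith : 1 < p + 2)).comp_hasFDerivAt x
    (hf.differentiable two_ne_zero x).hasFDerivAt
  have hderiv := (hkin.mul_const (1 / 2)).sub (hpot.mul_const (1 / (p + 2)))
  have hL : lagrangian S p f = (fun y => (∑ k ∈ S, partialDeriv k f y ^ 2) * (1 / 2)) -
      fun y => ((fun t : ℝ => |t| ^ (p + 2)) ∘ f) y * (1 / (p + 2)) := by
    ext y
    simp only [lagrangian, partialGradSq, Pi.sub_apply, Function.comp_apply]
    ring
  have hp2 : p + 2 ≠ 0 := by positivity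
  rw [partialDeriv, hL, hderiv.fderiv]
  simp only [partialDeriv, sub_apply, smul_apply, sum_apply, smul_eq_mul, Finset.mul_sum,
    add_sub_cancel_right, pow_one, Nat.add_one_sub_one, nsmul_eq_mul, Nat.cast_ofNat]
  congr 1
  · exact Finset.sum_congr rfl fun k _ => by ring
  · field_simp

end Lagrangian

section DegenerateElliptic

variable {N : ℕ} {f : EuclideanSpace ℝ (Fin N) → ℝ} {p : ℝ} {S : Finset (Fin N)}

lemma sum_partialDeriv_mul_partialDeriv (hf : ContDiff ℝ 2 f) (hp : 0 ≤ p)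
    {x : EuclideanSpace ℝ (Fin N)} (heq : ∑ j ∈ S, d2 f j x + |f x| ^ p * f x = 0) :
    ∑ j ∈ S, partialDeriv j (fun y => f y * partialDeriv j f y) x =
      partialGradSq S f x - |f x| ^ (p + 2) := by
  have hmul (j : Fin N) : partialDeriv j (fun y => f y * partialDeriv j f y) x =
      partialDeriv j f x ^ 2 + f x * d2 f j x := by
    rw [partialDeriv_mul j (hf.differentiable two_ne_zero x)
      ((contDiff_partialDeriv hf j).differentiable one_ne_zero x), d2_eq_partialDeriv, sq]
  have hpow : |f x| ^ (p + 2) = |f x| ^ p * f x * f x := by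
    rw [Real.rpow_add_of_nonneg (abs_nonneg _) hp zero_le_two, Real.rpow_two, sq_abs]
    ring
  simp only [hmul, Finset.sum_add_distrib, ← Finset.mul_sum, hpow, partialGradSq,
    eq_neg_of_add_eq_zero_left heq]
  ring

/- The divergence is that of Noether's current for the dilation of the coordinate `xᵢ`; since
`i ∉ S`, the factor `xᵢ` is differentiated only in the term that carries the Lagrangian. -/
lemma partialDeriv_coord_mul_lagrangian_sub_sum {i : Fin N} (hi : i ∉ S) (hf : ContDiff ℝ 2 f)
    (hp : 0 ≤ p) {x : EuclideanSpace ℝ (Fin N)}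
    (heq : ∑ j ∈ S, d2 f j x + |f x| ^ p * f x = 0) :
    partialDeriv i (fun y => y i * lagrangian S p f y) x
      - ∑ j ∈ S, partialDeriv j (fun y => y i * (partialDeriv i f y * partialDeriv j f y)) x =
      lagrangian S p f x := by
  have hdiff (j : Fin N) := (contDiff_partialDeriv hf j).differentiable one_ne_zero x
  have hcoord := (contDiff_coord i).differentiable one_ne_zero x
  have hcurrent (j : Fin N) (hj : j ∈ S) :
      partialDeriv j (fun y => y i * (partialDeriv i f y * partialDeriv j f y)) x =
        x i * (partialDeriv j f x * partialDeriv i (partialDeriv j f) x)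
          + x i * partialDeriv i f x * d2 f j x := by
    rw [partialDeriv_mul j hcoord ((hdiff i).fun_mul (hdiff j)),
      partialDeriv_mul j (hdiff i) (hdiff j), partialDeriv_coord,
      if_neg (ne_of_mem_of_not_mem hj hi).symm, partialDeriv_comm hf j i, d2_eq_partialDeriv]
    ring
  rw [Finset.sum_congr rfl hcurrent, Finset.sum_add_distrib, ← Finset.mul_sum, ← Finset.mul_sum,
    eq_neg_of_add_eq_zero_left heq, partialDeriv_mul i hcoord
      ((contDiff_lagrangian hf hp S).differentiable one_ne_zero x), partialDeriv_coord, if_pos rfl,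
    partialDeriv_lagrangian hf hp]
  ring

lemma integral_partialGradSq_eq_integral_abs_rpow (hp : 0 < p) (hpN : ((N : ℝ) - 2) * p ≤ 4)
    (hf : ContDiff ℝ 2 f) (hgrad : Integrable (fun x => ‖gradient f x‖ ^ 2))
    (hLp : Integrable (fun x => |f x| ^ (p + 2)))
    (heq : ∀ x, ∑ j ∈ S, d2 f j x + |f x| ^ p * f x = 0) :
    ∫ x, partialGradSq S f x = ∫ x, |f x| ^ (p + 2) := by
  have hfLp := (memLp_ofReal_iff_integrable_abs_rpow (by linarith)
    hf.continuous.aestronglyMeasurable).2 hLp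
  have hflux (j : Fin N) : HasVanishingFlux volume (fun x => f x * partialDeriv j f x) :=
    hasVanishingFlux_mul (by linarith) (by rw [finrank_euclideanSpace_fin]; linarith) hfLp
      (memLp_two_partialDeriv hf hgrad j)
  have hdiv (x : EuclideanSpace ℝ (Fin N)) := sum_partialDeriv_mul_partialDeriv hf hp.le (heq x)
  have hzero := integral_sum_fderiv_eq_zero (μ := volume) (s := S)
    (F := fun j x => f x * partialDeriv j f x) (v := fun j => EuclideanSpace.single j 1)
    (fun j _ => (hf.of_le one_le_two).mul (contDiff_partialDeriv hf j)) (fun j _ => hflux j)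
    (((integrable_partialGradSq hf hgrad S).sub hLp).congr (.of_forall fun x => (hdiv x).symm))
  rw [← sub_eq_zero, ← integral_sub (integrable_partialGradSq hf hgrad S) hLp, ← hzero]
  exact integral_congr_ae (.of_forall fun x => (hdiv x).symm)

lemma integral_lagrangian_eq_zero {i : Fin N} (hi : i ∉ S) (hp : 0 ≤ p)
    (hf : ContDiff ℝ 2 f) (hgrad : Integrable (fun x => ‖gradient f x‖ ^ 2))
    (hLp : Integrable (fun x => |f x| ^ (p + 2)))
    (heq : ∀ x, ∑ j ∈ S, d2 f j x + |f x| ^ p * f x = 0) :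
    ∫ x, lagrangian S p f x = 0 := by
  let F : Option (Fin N) → EuclideanSpace ℝ (Fin N) → ℝ := fun o x =>
    x i * o.elim (lagrangian S p f x) fun j => partialDeriv i f x * partialDeriv j f x
  let v : Option (Fin N) → EuclideanSpace ℝ (Fin N) := fun o =>
    o.elim (EuclideanSpace.single i 1) fun j => -EuclideanSpace.single j 1
  have hF : ∀ o, ContDiff ℝ 1 (F o)
    | none => (contDiff_coord i).mul (contDiff_lagrangian hf hp S)
    | some j => (contDiff_coord i).mul
        ((contDiff_partialDeriv hf i).mul (contDiff_partialDeriv hf j))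
  have hbound (o : Option (Fin N)) (x : EuclideanSpace ℝ (Fin N)) :
      |o.elim (lagrangian S p f x) fun j => partialDeriv i f x * partialDeriv j f x| ≤
        ‖gradient f x‖ ^ 2 + |f x| ^ (p + 2) := by
    cases o with
    | none => exact abs_lagrangian_le hp S f x
    | some j =>
      exact (abs_partialDeriv_mul_partialDeriv_le f i j x).trans
        (le_add_of_nonneg_right (by positivity))
  have hflux (o : Option (Fin N)) : HasVanishingFlux volume (F o) := by
    refine hasVanishingFlux_of_abs_le_norm_mul (hgrad.add hLp) fun x => ?_
    rw [abs_mul]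
    exact mul_le_mul (PiLp.norm_apply_le x i) (hbound o x) (abs_nonneg _) (norm_nonneg _)
  have hdiv (x : EuclideanSpace ℝ (Fin N)) :
      ∑ o ∈ S.insertNone, fderiv ℝ (F o) x (v o) = lagrangian S p f x := by
    rw [← partialDeriv_coord_mul_lagrangian_sub_sum hi hf hp (heq x)]
    simp [F, v, partialDeriv, Finset.sum_insertNone, sub_eq_add_neg]
  have hzero := integral_sum_fderiv_eq_zero (fun o _ => hF o) (fun o _ => hflux o)
    ((integrable_lagrangian hf hgrad hLp S).congr (.of_forall fun x => (hdiv x).symm))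
  simpa only [hdiv] using hzero

lemma eq_zero_of_integral_abs_rpow_eq_zero {X : Type*} [TopologicalSpace X] [MeasurableSpace X]
    {μ : Measure X} [μ.IsOpenPosMeasure] {g : X → ℝ} {q : ℝ} (hq : 0 < q) (hg : Continuous g)
    (hint : Integrable (fun x => |g x| ^ q) μ) (hzero : ∫ x, |g x| ^ q ∂μ = 0) (x : X) :
    g x = 0 := by
  have hae := (integral_eq_zero_iff_of_nonneg (fun x => by positivity) hint).1 hzero
  have hpow : |g x| ^ q = 0 :=
    congrFun ((hg.abs.rpow_const fun _ => .inr hq.le).ae_eq_iff_eq μ continuous_zero |>.1 hae) x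
  exact abs_eq_zero.1 ((Real.rpow_eq_zero (abs_nonneg _) hq.ne').1 hpow)

theorem stmt7_general {i : Fin N} (hi : i ∉ S) (hp : 0 < p) (hpN : ((N : ℝ) - 2) * p ≤ 4)
    (hf : ContDiff ℝ 2 f) (hgrad : Integrable (fun x => ‖gradient f x‖ ^ 2))
    (hLp : Integrable (fun x => |f x| ^ (p + 2)))
    (heq : ∀ x, ∑ j ∈ S, d2 f j x + |f x| ^ p * f x = 0) (x : EuclideanSpace ℝ (Fin N)) :
    f x = 0 := by
  refine eq_zero_of_integral_abs_rpow_eq_zero (by positivity) hf.continuous hLp ?_ x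
  have hamplitude := integral_partialGradSq_eq_integral_abs_rpow hp hpN hf hgrad hLp heq
  have hdilation := integral_lagrangian_eq_zero hi hp.le hf hgrad hLp heq
  rw [integral_lagrangian hf hgrad hLp, hamplitude] at hdilation
  have hfactor : (∫ x, |f x| ^ (p + 2)) * (p / (2 * (p + 2))) = 0 := by
    rw [← hdilation]
    field_simp
    ring
  exact (mul_eq_zero.1 hfactor).resolve_right (by positivity)

end DegenerateElliptic

lemma four_div_sub_two_add_two {n : ℝ} (hn : n - 2 ≠ 0) : 4 / (n - 2) + 2 = 2 * n / (n - 2) := by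
  field_simp
  ring

/-- Case `ℓ² = 1` of Lemma 2.5: a finite-energy solution of the degenerate elliptic
equation `Σ_{j≥2} ∂²ⱼf + |f|^{4/(N-2)}f = 0` vanishes identically. -/
theorem stmt7 (N : ℕ) (hN : N = 3 ∨ N = 4 ∨ N = 5)
    (f : EuclideanSpace ℝ (Fin N) → ℝ)
    (hf : ContDiff ℝ 2 f)
    (hgrad : Integrable (fun x => ‖gradient f x‖ ^ 2))
    (hLp : Integrable (fun x => |f x| ^ (2 * (N : ℝ) / ((N : ℝ) - 2))))
    (heq : ∀ x, (∑ j ∈ Finset.univ.erase (⟨0, by omega⟩ : Fin N), d2 f j x)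
        + |f x| ^ (4 / ((N : ℝ) - 2)) * f x = 0) :
    ∀ x, f x = 0 := by
  have hN2 : 0 < (N : ℝ) - 2 := by rcases hN with rfl | rfl | rfl <;> norm_num
  exact stmt7_general (Finset.notMem_erase _ _) (by positivity) (mul_div_cancel₀ 4 hN2.ne').le
    hf hgrad (by rwa [four_div_sub_two_add_two hN2.ne']) heq

end
end

section
/- Let N ∈ {3,4,5} and set n = N−1. Let F : ℝ^n → ℝ be twice continuously differentiable with ∇F ∈ L²(ℝ^n) and F ∈ L^{2N/(N−2)}(ℝ^n), satisfying pointwise ΔF + |F|^{4/(N−2)} F = 0 on ℝ^n. Then the Pohozaev-type identity (n−2)·∫_{ℝ^n}|∇F|² dx = (n(N−2)/N)·∫_{ℝ^n}|F|^{2N/(N−2)} dx holds. -/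
/-!
Pohozaev's argument: multiply the equation by the dilation generator `x · ∇F`. For
`ΔF + G'(F) = 0` in dimension `n` this makes the vector field
`(x · ∇F) ∇F - (|∇F|² / 2 - G(F)) x` have divergence `(1 - n / 2) |∇F|² + n G(F)`. The field is
`O(|x|)` times an integrable function and its divergence is integrable, so inserting a cutoff
`χ(x / R)` and letting `R → ∞` shows that the divergence integrates to zero: the error term is
dominated because `|x / R| |∇χ(x / R)|` is bounded. The identity is the case `G(s) = |s|^p / p`
with `p = 2N / (N - 2)`.
-/

open MeasureTheory Metric Filter Set

noncomputable section

open scoped Topology RealInnerProductSpace Gradient Laplacian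

section Divergence

variable {E : Type*} [NormedAddCommGroup E] [NormedSpace ℝ E]

/-- The divergence of a vector field on a real normed space, as the trace of its derivative. It is
coordinate-free, and it takes the value `0` where the field is not differentiable. -/
def divergence (V : E → E) (x : E) : ℝ :=
  LinearMap.trace ℝ E (fderiv ℝ V x)

lemma divergence_sub {V W : E → E} {x : E} (hV : DifferentiableAt ℝ V x)
    (hW : DifferentiableAt ℝ W x) :
    divergence (fun y ↦ V y - W y) x = divergence V x - divergence W x := by
  simp only [divergence, fderiv_fun_sub hV hW, ContinuousLinearMap.toLinearMap_sub, map_sub]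

lemma exists_norm_mul_norm_fderiv_le {χ : E → ℝ} (hχ : ContDiff ℝ 1 χ)
    (hχc : HasCompactSupport χ) : ∃ C, ∀ y, ‖y‖ * ‖fderiv ℝ χ y‖ ≤ C := by
  obtain ⟨C, hC⟩ := HasCompactSupport.exists_bound_of_continuous
    (f := fun y ↦ ‖y‖ * ‖fderiv ℝ χ y‖) (hχc.fderiv ℝ).norm.mul_left
    (continuous_norm.mul (hχ.continuous_fderiv one_ne_zero).norm)
  exact ⟨C, fun y ↦ (le_abs_self _).trans (hC y)⟩

variable [FiniteDimensional ℝ E]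

lemma divergence_id (x : E) : divergence (fun y : E ↦ y) x = Module.finrank ℝ E := by
  simp only [divergence, fderiv_fun_id, ContinuousLinearMap.coe_id, LinearMap.trace_id]

lemma divergence_smul {g : E → ℝ} {V : E → E} {x : E} (hg : DifferentiableAt ℝ g x)
    (hV : DifferentiableAt ℝ V x) :
    divergence (fun y ↦ g y • V y) x = g x * divergence V x + fderiv ℝ g x (V x) := by
  have hrank : ((fderiv ℝ g x).smulRight (V x) : E →ₗ[ℝ] E) =
      (fderiv ℝ g x : E →ₗ[ℝ] ℝ).smulRight (V x) := rfl
  simp only [divergence, fderiv_fun_smul hg hV, ContinuousLinearMap.toLinearMap_add,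
    ContinuousLinearMap.toLinearMap_smul, map_add, map_smul, hrank, LinearMap.trace_smulRight,
    smul_eq_mul, ContinuousLinearMap.coe_coe]

/-- The trace of a continuous endomorphism of a finite-dimensional space, as a continuous linear
functional; it lets the trace pass through limits and integrals. -/
def traceCLM (E : Type*) [NormedAddCommGroup E] [NormedSpace ℝ E] [FiniteDimensional ℝ E] :
    (E →L[ℝ] E) →L[ℝ] ℝ :=
  (LinearMap.trace ℝ E ∘ₗ ContinuousLinearMap.coeLM ℝ).toContinuousLinearMap

lemma divergence_eq_traceCLM (V : E → E) (x : E) : divergence V x = traceCLM E (fderiv ℝ V x) :=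
  rfl

lemma continuous_divergence {V : E → E} (hV : ContDiff ℝ 1 V) : Continuous (divergence V) :=
  (traceCLM E).continuous.comp (hV.continuous_fderiv one_ne_zero)

lemma divergence_comp_smul_smul {χ : E → ℝ} {V : E → E} (hχ : Differentiable ℝ χ)
    (hV : Differentiable ℝ V) (r : ℝ) (x : E) :
    divergence (fun y ↦ χ (r • y) • V y) x =
      χ (r • x) * divergence V x + r * fderiv ℝ χ (r • x) (V x) := by
  have hχr : Differentiable ℝ fun y ↦ χ (r • y) := hχ.comp (differentiable_id.const_smul r)
  have hfderiv : fderiv ℝ (fun y ↦ χ (r • y)) x = r • fderiv ℝ χ (r • x) := by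
    simpa using fderiv_comp_smul (𝕜 := ℝ) (f := χ) r (x := x)
  rw [divergence_smul (hχr x) (hV x), hfderiv, smul_apply, smul_eq_mul]

lemma norm_divergence_comp_smul_smul_le {χ : E → ℝ} {V : E → E} {r a C : ℝ} {x : E}
    (hχ : Differentiable ℝ χ) (hχ1 : ∀ y, ‖χ y‖ ≤ 1) (hχC : ∀ y, ‖y‖ * ‖fderiv ℝ χ y‖ ≤ C)
    (hV : Differentiable ℝ V) (hr : 0 ≤ r) (ha : 0 ≤ a) (hVa : ‖V x‖ ≤ ‖x‖ * a) :
    ‖divergence (fun y ↦ χ (r • y) • V y) x‖ ≤ ‖divergence V x‖ + C * a := by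
  have hmain : ‖χ (r • x) * divergence V x‖ ≤ ‖divergence V x‖ := by
    rw [norm_mul]
    exact mul_le_of_le_one_left (norm_nonneg _) (hχ1 _)
  have herror : ‖r * fderiv ℝ χ (r • x) (V x)‖ ≤ C * a :=
    calc ‖r * fderiv ℝ χ (r • x) (V x)‖ = r * ‖fderiv ℝ χ (r • x) (V x)‖ := by
          rw [norm_mul, Real.norm_of_nonneg hr]
      _ ≤ r * (‖fderiv ℝ χ (r • x)‖ * (‖x‖ * a)) := by
          gcongr
          exact (fderiv ℝ χ (r • x)).le_opNorm_of_le hVa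
      _ = ‖r • x‖ * ‖fderiv ℝ χ (r • x)‖ * a := by
          rw [norm_smul, Real.norm_of_nonneg hr]
          ring
      _ ≤ C * a := by
          gcongr
          exact hχC _
  rw [divergence_comp_smul_smul hχ hV]
  exact (norm_add_le _ _).trans (add_le_add hmain herror)

lemma tendsto_divergence_comp_smul_smul {χ : E → ℝ} {V : E → E} (hχ : ContDiff ℝ 1 χ)
    (hχ0 : χ 0 = 1) (hV : Differentiable ℝ V) (x : E) :
    Tendsto (fun r : ℝ ↦ divergence (fun y ↦ χ (r • y) • V y) x) (𝓝 0) (𝓝 (divergence V x)) := by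
  have hdχ : Continuous (fderiv ℝ χ) := hχ.continuous_fderiv one_ne_zero
  have hsmul : Continuous fun r : ℝ ↦ r • x := continuous_id.smul continuous_const
  have hcont : Continuous fun r : ℝ ↦
      χ (r • x) * divergence V x + r * fderiv ℝ χ (r • x) (V x) :=
    ((hχ.continuous.comp hsmul).mul continuous_const).add
      (continuous_id.mul ((hdχ.comp hsmul).clm_apply continuous_const))
  simp only [divergence_comp_smul_smul (hχ.differentiable one_ne_zero) hV]
  simpa [hχ0] using hcont.tendsto 0

variable [MeasurableSpace E] [BorelSpace E] {μ : Measure E} [μ.IsAddHaarMeasure]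

lemma integral_fderiv_eq_zero {F : Type*} [NormedAddCommGroup F] [NormedSpace ℝ F]
    {f : E → F} (hf : Differentiable ℝ f) (hfi : Integrable f μ) (hdf : Integrable (fderiv ℝ f) μ) :
    ∫ x, fderiv ℝ f x ∂μ = 0 := by
  ext v
  rw [ContinuousLinearMap.integral_apply hdf]
  simpa using integral_smul_fderiv_eq_neg_fderiv_smul_of_integrable (μ := μ) (v := v)
    (f := fun _ ↦ (1 : ℝ)) (g := f) (by simp) (by simpa using hdf.apply_continuousLinearMap v)
    (by simpa using hfi) (by simp) (fun x _ ↦ hf x)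

lemma integral_divergence_eq_zero {V : E → E} (hV : Differentiable ℝ V) (hVi : Integrable V μ)
    (hdV : Integrable (fderiv ℝ V) μ) : ∫ x, divergence V x ∂μ = 0 := by
  simp only [divergence_eq_traceCLM]
  rw [(traceCLM E).integral_comp_comm hdV, integral_fderiv_eq_zero hV hVi hdV, map_zero]

lemma integral_divergence_eq_zero_of_hasCompactSupport {V : E → E} (hV : ContDiff ℝ 1 V)
    (hVc : HasCompactSupport V) : ∫ x, divergence V x ∂μ = 0 :=
  integral_divergence_eq_zero (hV.differentiable one_ne_zero)
    (hV.continuous.integrable_of_hasCompactSupport hVc)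
    ((hV.continuous_fderiv one_ne_zero).integrable_of_hasCompactSupport (hVc.fderiv ℝ))

lemma integral_divergence_eq_zero_of_norm_le {V : E → E} {g : E → ℝ} (hV : ContDiff ℝ 1 V)
    (hdiv : Integrable (divergence V) μ) (hg : Integrable g μ) (hVg : ∀ x, ‖V x‖ ≤ ‖x‖ * g x) :
    ∫ x, divergence V x ∂μ = 0 := by
  let χ : ContDiffBump (0 : E) := default
  have hχ : ContDiff ℝ 1 χ := χ.contDiff
  have hχd : Differentiable ℝ χ := hχ.differentiable one_ne_zero
  have hχ0 : χ 0 = 1 := χ.one_of_mem_closedBall (mem_closedBall_self χ.rIn_pos.le)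
  have hχ1 (y) : ‖χ y‖ ≤ 1 := (Real.norm_of_nonneg χ.nonneg).trans_le χ.le_one
  obtain ⟨C, hC⟩ := exists_norm_mul_norm_fderiv_le hχ χ.hasCompactSupport
  have hVd : Differentiable ℝ V := hV.differentiable one_ne_zero
  have hVg' (x) : ‖V x‖ ≤ ‖x‖ * ‖g x‖ := (hVg x).trans (by gcongr; exact Real.le_norm_self _)
  let U (r : ℝ) (y : E) : E := χ (r • y) • V y
  have hU (r) : ContDiff ℝ 1 (U r) := (hχ.comp (contDiff_id.const_smul r)).smul hV
  have hU_zero : ∀ᶠ r in 𝓝[>] 0, ∫ x, divergence (U r) x ∂μ = 0 := by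
    filter_upwards [self_mem_nhdsWithin] with r hr
    exact integral_divergence_eq_zero_of_hasCompactSupport (hU r)
      (χ.hasCompactSupport.comp_smul (ne_of_gt hr)).smul_right
  have hU_lim : Tendsto (fun r ↦ ∫ x, divergence (U r) x ∂μ) (𝓝[>] 0)
      (𝓝 (∫ x, divergence V x ∂μ)) := by
    refine tendsto_integral_filter_of_dominated_convergence
      (fun x ↦ ‖divergence V x‖ + C * ‖g x‖)
      (.of_forall fun r ↦ (continuous_divergence (hU r)).aestronglyMeasurable) ?_
      (hdiv.norm.add (hg.norm.const_mul C)) (.of_forall fun x ↦ ?_)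
    · filter_upwards [self_mem_nhdsWithin] with r hr
      exact .of_forall fun x ↦ norm_divergence_comp_smul_smul_le hχd hχ1 hC hVd (le_of_lt hr)
        (norm_nonneg _) (hVg' x)
    · exact (tendsto_divergence_comp_smul_smul hχ hχ0 hVd x).mono_left nhdsWithin_le_nhds
  exact tendsto_nhds_unique_of_eventuallyEq hU_lim tendsto_const_nhds hU_zero

end Divergence

section Gradient

variable {E : Type*} [NormedAddCommGroup E] [InnerProductSpace ℝ E] {F : E → ℝ}

section CompleteSpace

variable [CompleteSpace E]

lemma contDiff_gradient (hF : ContDiff ℝ 2 F) : ContDiff ℝ 1 (∇ F) :=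
  (InnerProductSpace.toDual ℝ E).symm.contDiff.comp (hF.fderiv_right (by norm_num))

lemma inner_fderiv_gradient_left (F : E → ℝ) (x v w : E) :
    ⟪fderiv ℝ (∇ F) x v, w⟫ = fderiv ℝ (fderiv ℝ F) x v w := by
  have hdual : fderiv ℝ F = InnerProductSpace.toDual ℝ E ∘ ∇ F := toDual_comp_gradient.symm
  rw [hdual, LinearIsometryEquiv.comp_fderiv]
  rfl

lemma isSymmetric_fderiv_gradient (hF : ContDiff ℝ 2 F) (x : E) :
    (fderiv ℝ (∇ F) x : E →ₗ[ℝ] E).IsSymmetric := by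
  intro v w
  have hsymm : IsSymmSndFDerivAt ℝ F x := hF.contDiffAt.isSymmSndFDerivAt (by simp)
  simp only [ContinuousLinearMap.coe_coe]
  rw [inner_fderiv_gradient_left, hsymm v w, ← inner_fderiv_gradient_left, real_inner_comm]

end CompleteSpace

lemma divergence_gradient [FiniteDimensional ℝ E] (F : E → ℝ) (x : E) :
    divergence (∇ F) x = Δ F x := by
  let b := stdOrthonormalBasis ℝ E
  rw [divergence, LinearMap.trace_eq_sum_inner _ b,
    InnerProductSpace.laplacian_eq_iteratedFDeriv_orthonormalBasis F b]
  refine Finset.sum_congr rfl fun i _ ↦ ?_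
  rw [real_inner_comm, ContinuousLinearMap.coe_coe, inner_fderiv_gradient_left,
    iteratedFDeriv_two_apply]
  rfl

end Gradient

lemma sum_d2_eq_laplacian {n : ℕ} {F : EuclideanSpace ℝ (Fin n) → ℝ} (hF : ContDiff ℝ 2 F)
    (x : EuclideanSpace ℝ (Fin n)) : ∑ j, d2 F j x = Δ F x := by
  have hdF : DifferentiableAt ℝ (fderiv ℝ F) x :=
    (hF.fderiv_right (m := 1) (by norm_num)).differentiable one_ne_zero x
  rw [InnerProductSpace.laplacian_eq_iteratedFDeriv_orthonormalBasis F
    (EuclideanSpace.basisFun (Fin n) ℝ)]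
  refine Finset.sum_congr rfl fun j _ ↦ ?_
  rw [d2, fderiv_clm_apply hdF (differentiableAt_const _), iteratedFDeriv_two_apply]
  simp

section Pohozaev

variable {E : Type*} [NormedAddCommGroup E] [InnerProductSpace ℝ E] {G : ℝ → ℝ}
  {F : E → ℝ}

section CompleteSpace

variable [CompleteSpace E]

/-- The Pohozaev vector field `(x · ∇F) ∇F - (|∇F|² / 2 - G(F)) x` of the equation
`ΔF + G'(F) = 0`: the current attached to the dilations of `E`. -/
def pohozaevField (G : ℝ → ℝ) (F : E → ℝ) (x : E) : E :=
  ⟪∇ F x, x⟫ • ∇ F x - (1 / 2 * ‖∇ F x‖ ^ 2 - G (F x)) • x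

lemma contDiff_pohozaevField (hG : ContDiff ℝ 1 G) (hF : ContDiff ℝ 2 F) :
    ContDiff ℝ 1 (pohozaevField G F) := by
  have hdF : ContDiff ℝ 1 (∇ F) := contDiff_gradient hF
  have hGF : ContDiff ℝ 1 fun x ↦ G (F x) := hG.comp (hF.of_le one_le_two)
  exact ((hdF.inner ℝ contDiff_id).smul hdF).sub
    (((contDiff_const.mul (hdF.norm_sq ℝ)).sub hGF).smul contDiff_id)

lemma norm_pohozaevField_le (G : ℝ → ℝ) (F : E → ℝ) (x : E) :
    ‖pohozaevField G F x‖ ≤ ‖x‖ * (3 / 2 * ‖∇ F x‖ ^ 2 + ‖G (F x)‖) := by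
  have hinner : ‖⟪∇ F x, x⟫‖ ≤ ‖∇ F x‖ * ‖x‖ := norm_inner_le_norm _ _
  have henergy : ‖1 / 2 * ‖∇ F x‖ ^ 2 - G (F x)‖ ≤ 1 / 2 * ‖∇ F x‖ ^ 2 + ‖G (F x)‖ :=
    (norm_sub_le _ _).trans_eq (by rw [Real.norm_of_nonneg (by positivity)])
  calc ‖pohozaevField G F x‖
      ≤ ‖⟪∇ F x, x⟫‖ * ‖∇ F x‖ + ‖1 / 2 * ‖∇ F x‖ ^ 2 - G (F x)‖ * ‖x‖ := by
        rw [← norm_smul, ← norm_smul]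
        exact norm_sub_le _ _
    _ ≤ ‖∇ F x‖ * ‖x‖ * ‖∇ F x‖ + (1 / 2 * ‖∇ F x‖ ^ 2 + ‖G (F x)‖) * ‖x‖ := by gcongr
    _ = ‖x‖ * (3 / 2 * ‖∇ F x‖ ^ 2 + ‖G (F x)‖) := by ring

lemma fderiv_inner_gradient_id (hF : ContDiff ℝ 2 F) (x v : E) :
    fderiv ℝ (fun y ↦ ⟪∇ F y, y⟫) x v = ⟪∇ F x, v⟫ + ⟪fderiv ℝ (∇ F) x v, x⟫ := by
  have hdF : DifferentiableAt ℝ (∇ F) x := (contDiff_gradient hF).differentiable one_ne_zero x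
  rw [fderiv_inner_apply ℝ hdF differentiableAt_fun_id]
  simp

lemma fderiv_half_norm_gradient_sq_sub_comp (hG : Differentiable ℝ G) (hF : ContDiff ℝ 2 F)
    (x v : E) :
    fderiv ℝ (fun y ↦ 1 / 2 * ‖∇ F y‖ ^ 2 - G (F y)) x v =
      ⟪∇ F x, fderiv ℝ (∇ F) x v⟫ - deriv G (F x) * ⟪∇ F x, v⟫ := by
  have hdF : HasFDerivAt (∇ F) (fderiv ℝ (∇ F) x) x :=
    ((contDiff_gradient hF).differentiable one_ne_zero x).hasFDerivAt
  have hGF : HasFDerivAt (fun y ↦ G (F y)) (deriv G (F x) • fderiv ℝ F x) x :=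
    (hG (F x)).hasDerivAt.comp_hasFDerivAt x (hF.differentiable two_ne_zero x).hasFDerivAt
  have henergy : HasFDerivAt (fun y ↦ 1 / 2 * ‖∇ F y‖ ^ 2 - G (F y)) _ x :=
    (hdF.norm_sq.const_mul (1 / 2)).sub hGF
  rw [henergy.fderiv]
  simp

end CompleteSpace

variable [FiniteDimensional ℝ E]

lemma divergence_pohozaevField (hG : ContDiff ℝ 1 G) (hF : ContDiff ℝ 2 F) (x : E) :
    divergence (pohozaevField G F) x =
      ⟪∇ F x, x⟫ * (Δ F x + deriv G (F x)) + (1 - (Module.finrank ℝ E : ℝ) / 2) * ‖∇ F x‖ ^ 2 +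
        Module.finrank ℝ E * G (F x) := by
  have hdF : Differentiable ℝ (∇ F) := (contDiff_gradient hF).differentiable one_ne_zero
  have hGd : Differentiable ℝ G := hG.differentiable one_ne_zero
  have hFd : Differentiable ℝ F := hF.differentiable two_ne_zero
  have hinner : DifferentiableAt ℝ (fun y ↦ ⟪∇ F y, y⟫) x := (hdF x).inner ℝ differentiableAt_id
  have hsq : DifferentiableAt ℝ (fun y ↦ ‖∇ F y‖ ^ 2) x := (hdF x).norm_sq ℝ
  have henergy : DifferentiableAt ℝ (fun y ↦ 1 / 2 * ‖∇ F y‖ ^ 2 - G (F y)) x :=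
    (hsq.const_mul (1 / 2)).sub ((hGd (F x)).comp x (hFd x))
  have hsymm : ⟪fderiv ℝ (∇ F) x (∇ F x), x⟫ = ⟪∇ F x, fderiv ℝ (∇ F) x x⟫ :=
    isSymmetric_fderiv_gradient hF x (∇ F x) x
  calc divergence (pohozaevField G F) x
      = divergence (fun y ↦ ⟪∇ F y, y⟫ • ∇ F y) x -
          divergence (fun y ↦ (1 / 2 * ‖∇ F y‖ ^ 2 - G (F y)) • y) x :=
        divergence_sub (hinner.smul (hdF x)) (henergy.smul differentiableAt_id)
    _ = ⟪∇ F x, x⟫ * Δ F x + (‖∇ F x‖ ^ 2 + ⟪fderiv ℝ (∇ F) x (∇ F x), x⟫) -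
          ((1 / 2 * ‖∇ F x‖ ^ 2 - G (F x)) * Module.finrank ℝ E +
            (⟪∇ F x, fderiv ℝ (∇ F) x x⟫ - deriv G (F x) * ⟪∇ F x, x⟫)) := by
        rw [divergence_smul hinner (hdF x), divergence_gradient, fderiv_inner_gradient_id hF,
          real_inner_self_eq_norm_sq, divergence_smul henergy differentiableAt_fun_id,
          divergence_id, fderiv_half_norm_gradient_sq_sub_comp hGd hF]
    _ = _ := by rw [hsymm]; ring

variable [MeasurableSpace E] [BorelSpace E] {μ : Measure E} [μ.IsAddHaarMeasure]

theorem pohozaev_identity (hG : ContDiff ℝ 1 G) (hF : ContDiff ℝ 2 F)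
    (heq : ∀ x, Δ F x + deriv G (F x) = 0) (hgrad : Integrable (fun x ↦ ‖∇ F x‖ ^ 2) μ)
    (hGF : Integrable (fun x ↦ G (F x)) μ) :
    ((Module.finrank ℝ E : ℝ) / 2 - 1) * ∫ x, ‖∇ F x‖ ^ 2 ∂μ =
      Module.finrank ℝ E * ∫ x, G (F x) ∂μ := by
  set n : ℝ := (Module.finrank ℝ E : ℝ)
  have hdiv : divergence (pohozaevField G F) =
      fun x ↦ (1 - n / 2) * ‖∇ F x‖ ^ 2 + n * G (F x) := by
    ext x
    rw [divergence_pohozaevField hG hF, heq, mul_zero, zero_add]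
  have hdiv_int : Integrable (divergence (pohozaevField G F)) μ := by
    rw [hdiv]
    exact (hgrad.const_mul _).add (hGF.const_mul _)
  have hzero : ∫ x, divergence (pohozaevField G F) x ∂μ = 0 :=
    integral_divergence_eq_zero_of_norm_le (contDiff_pohozaevField hG hF) hdiv_int
      ((hgrad.const_mul (3 / 2)).add hGF.norm) (norm_pohozaevField_le G F)
  rw [hdiv, integral_add (hgrad.const_mul _) (hGF.const_mul _), integral_const_mul,
    integral_const_mul] at hzero
  linarith

theorem pohozaev_identity_rpow {p : ℝ} (hp : 1 < p) (hF : ContDiff ℝ 2 F)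
    (heq : ∀ x, Δ F x + |F x| ^ (p - 2) * F x = 0)
    (hgrad : Integrable (fun x ↦ ‖∇ F x‖ ^ 2) μ) (hLp : Integrable (fun x ↦ |F x| ^ p) μ) :
    ((Module.finrank ℝ E : ℝ) / 2 - 1) * ∫ x, ‖∇ F x‖ ^ 2 ∂μ =
      Module.finrank ℝ E / p * ∫ x, |F x| ^ p ∂μ := by
  have hG : ContDiff ℝ 1 fun s : ℝ ↦ |s| ^ p / p := by
    simpa only [Real.norm_eq_abs] using (contDiff_norm_rpow (E := ℝ) hp).div_const p
  have hderiv (s : ℝ) : deriv (fun s : ℝ ↦ |s| ^ p / p) s = |s| ^ (p - 2) * s := by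
    rw [((hasDerivAt_abs_rpow s hp).div_const p).deriv]
    field_simp
  have hpoh := pohozaev_identity hG hF (fun x ↦ by rw [hderiv, heq]) hgrad (hLp.div_const p)
  rw [integral_div] at hpoh
  rw [hpoh]
  ring

end Pohozaev

theorem stmt8_general (N : ℕ) (hN : 3 ≤ N)
    (F : EuclideanSpace ℝ (Fin (N - 1)) → ℝ)
    (hF : ContDiff ℝ 2 F)
    (hgrad : Integrable (fun x => ‖gradient F x‖ ^ 2))
    (hLp : Integrable (fun x => |F x| ^ (2 * (N : ℝ) / ((N : ℝ) - 2))))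
    (heq : ∀ x, (∑ j, d2 F j x) + |F x| ^ (4 / ((N : ℝ) - 2)) * F x = 0) :
    (((N : ℝ) - 1) - 2) * (∫ x, ‖gradient F x‖ ^ 2)
      = (((N : ℝ) - 1) * ((N : ℝ) - 2) / (N : ℝ))
          * (∫ x, |F x| ^ (2 * (N : ℝ) / ((N : ℝ) - 2))) := by
  have hN' : (3 : ℝ) ≤ N := by exact_mod_cast hN
  have hN2 : (N : ℝ) - 2 ≠ 0 := by linarith
  have hp : 1 < 2 * (N : ℝ) / ((N : ℝ) - 2) := by
    rw [lt_div_iff₀ (by linarith)]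
    linarith
  have hexp : 2 * (N : ℝ) / ((N : ℝ) - 2) - 2 = 4 / ((N : ℝ) - 2) := by
    field_simp
    ring
  have hrank : (Module.finrank ℝ (EuclideanSpace ℝ (Fin (N - 1))) : ℝ) = (N : ℝ) - 1 := by
    rw [finrank_euclideanSpace_fin, Nat.cast_pred (by omega)]
  have hpoh := pohozaev_identity_rpow hp hF
    (fun x ↦ by rw [← sum_d2_eq_laplacian hF, hexp, heq]) hgrad hLp
  rw [hrank] at hpoh
  calc (((N : ℝ) - 1) - 2) * (∫ x, ‖gradient F x‖ ^ 2)
      = 2 * ((((N : ℝ) - 1) / 2 - 1) * ∫ x, ‖gradient F x‖ ^ 2) := by ring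
    _ = _ := by
      rw [hpoh]
      field_simp

/-- Pohozaev-type identity in dimension `n = N - 1` for the supercritical equation
`ΔF + |F|^{4/(N-2)}F = 0`:  `(n-2)∫|∇F|² = (n(N-2)/N)∫|F|^{2N/(N-2)}`. -/
theorem stmt8 (N : ℕ) (hN : N = 3 ∨ N = 4 ∨ N = 5)
    (F : EuclideanSpace ℝ (Fin (N - 1)) → ℝ)
    (hF : ContDiff ℝ 2 F)
    (hgrad : Integrable (fun x => ‖gradient F x‖ ^ 2))
    (hLp : Integrable (fun x => |F x| ^ (2 * (N : ℝ) / ((N : ℝ) - 2))))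
    (heq : ∀ x, (∑ j, d2 F j x) + |F x| ^ (4 / ((N : ℝ) - 2)) * F x = 0) :
    (((N : ℝ) - 1) - 2) * (∫ x, ‖gradient F x‖ ^ 2)
      = (((N : ℝ) - 1) * ((N : ℝ) - 2) / (N : ℝ))
          * (∫ x, |F x| ^ (2 * (N : ℝ) / ((N : ℝ) - 2))) := by
  exact stmt8_general N (by omega) F hF hgrad hLp heq

end
end
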